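/- There exist constants K_1 > 0 and K_2 > 0 such that, for any large enough integer ℓ̲ and any integer c with 1 ≤ c ≤ h_{n_{ℓ̲}}, the following holds: if I ⊂ ℤ is an interval contained in an n_{(ℓ̲+ℓ)}-crossing for some ℓ ≥ 1, and if |I| ≥ η·h_{n_{(ℓ̲+ℓ−1)}}, then (1) the proportion of integers j ∈ I such that (T^{×d})^j x ∈ C_{n_{ℓ̲}}^d is at least (1−η)^{2ℓ}, and (2) among all the integers j ∈ I such that (T^{×d})^j x ∈ C_{n_{ℓ̲}}^d, the proportion of those belonging to an n_{ℓ̲}-crossing of size ≤ c is bounded above by K_1·c/h_{n_{ℓ̲}} + K_2/3^{ℓ̲}. -/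

import Mathlib

/-!
Write `s` for the number of spacers put above each subcolumn of tower `N = n_m`, and let `I` be an
interval along which every coordinate stays in tower `n_{m+1}`, with `|I| ≥ η h_N`. The passages
of a coordinate at the bottom level of tower `N` are at least `h_N` apart (`NFC.card_starts`), so
all coordinates together have at most `C|I|/h_N` of them in `I`, where `C = (1+d)/η + d`
(`NFC.card_cuts_le`). Everything is counted against these passages.

* Between the steps `n_m + 1` and `n_{m+1}` only single spacers are inserted, so every hole of
  tower `N` met in `I` lies at most `s + 2` before such a passage or before the end of `I`
  (`NFC.hole_dist`). Since `s/h_N` is at most about `3^(-k(m))`, which tends to `0`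
  (`NFCseq.spa_small`), the holes occupy a proportion at most `η/2` of `I`.
* The part of `I` spent in `C_N^d` can only begin again at such a passage, so it splits into at
  most `C|I|/h_N` intervals (`exists_pieces`). Those shorter than `η h_{n_{m-1}}` have total length
  at most `C|I|/9^m`, because `h_N ≥ 9^m h_{n_{m-1}}`; the others satisfy the same hypotheses
  one step lower.
* Spacers above every subcolumn prevent a point from passing directly between occurrences of tower
  `N`, so by maximality an `N`-crossing begins at such a passage (`NFC.crossing_start`), and at
  most `c C|I|/h_N` times of `I` lie in `N`-crossings of size at most `c`.

Descending from `n_{lb+ℓ}` to `n_lb` (`NFC.estimates`), each step keeps a proportion at least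
`1-η` of the times, which gives (1). For (2), the pieces of the last step contribute
`O(c/h_{n_lb})`. The times in short pieces at the step from `n_{m+1}` to `n_m`, where
`m = lb+e+1`, are at most `C|I|/9^m` in number, while at least `2^(-(e+2))|I|` times are spent in
`C_{n_lb}^d`; the resulting relative losses sum to `O(3^(-lb))`.
-/

open MeasureTheory Set Filter Topology
open scoped ENNReal
open scoped Classical

noncomputable section

/-! ## The nearly finite Chacon transformation: symbolic model -/

/-- The alphabet `{*} ∪ ℕ` is modelled by `Option ℕ`, `none` playing the role of `*`. -/
instance optionNatTop : TopologicalSpace (Option ℕ) := ⊥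

/-- The data of the two sequences `(n_ℓ)` and `(ℓ_k)` used in the construction of the
nearly finite Chacon transformation, together with the growth conditions imposed on them. -/
structure NFCseq where
  nseq : ℕ → ℕ
  lseq : ℕ → ℕ
  nseq_zero : nseq 0 = 0
  lseq_zero : lseq 0 = 1
  lseq_strictMono : StrictMono lseq
  nseq_growth : ∀ ℓ : ℕ, 1 ≤ ℓ → nseq (ℓ - 1) + 2 * ℓ < nseq ℓ
  lseq_growth : ∀ k : ℕ, (2 : ℝ) ≤ (1 + ((7 : ℝ) ^ k)⁻¹) ^ (lseq (k + 1) - lseq k)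

namespace NFCseq

/-- `k(ℓ)`: the unique `k` with `ℓ_k ≤ ℓ < ℓ_{k+1}`. -/
def kOf (P : NFCseq) (ℓ : ℕ) : ℕ := sSup {k | P.lseq k ≤ ℓ}

/-- The heights `h_n` of the towers. -/
def hgt (P : NFCseq) : ℕ → ℕ
  | 0 => 1
  | n + 1 =>
    3 * P.hgt n +
      3 * (if hn : ∃ ℓ, 1 ≤ ℓ ∧ P.nseq ℓ = n then P.hgt (n - P.kOf (Nat.find hn)) else 0) + 1
termination_by n => n
decreasing_by all_goals omega

theorem hgt_pos (P : NFCseq) (n : ℕ) : 0 < P.hgt n := by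
  cases n with
  | zero => simp [hgt]
  | succ n => rw [hgt]; omega

/-- The number of spacers put above the first subcolumn at step `n+1`
(`h_{n-k(ℓ)}` if `n = n_ℓ`, and `0` otherwise). -/
def spa (P : NFCseq) (n : ℕ) : ℕ :=
  if hn : ∃ ℓ, 1 ≤ ℓ ∧ P.nseq ℓ = n then P.hgt (n - P.kOf (Nat.find hn)) else 0

/-- The map `p_n` sending the index of a level of tower `n+1` to the index of the level of
tower `n` containing it (`none` if that level lies outside tower `n`). -/
def pmap (P : NFCseq) (n j : ℕ) : Option ℕ :=
  if j < P.hgt n then some j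
  else if j < P.hgt n + P.spa n then none
  else if j < 2 * P.hgt n + P.spa n then some (j - (P.hgt n + P.spa n))
  else if j < 2 * P.hgt n + 2 * P.spa n + 1 then none
  else if j < 3 * P.hgt n + 2 * P.spa n + 1 then some (j - (2 * P.hgt n + 2 * P.spa n + 1))
  else none

/-- The defining property of points of the space `X`. -/
def Xspec (P : NFCseq) (x : ℕ → Option ℕ) : Prop :=
  (∀ n, x n = (x (n + 1)).bind (P.pmap n)) ∧ ∃ n, x n ≠ none

/-- The space `X` of the symbolic model, with its product (subspace) topology. -/
abbrev Xpt (P : NFCseq) : Type := {x : ℕ → Option ℕ // P.Xspec x}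

instance (P : NFCseq) : MeasurableSpace P.Xpt := borel _

/-- `L_n^j`, the `j`-th level of tower `n`. -/
def level (P : NFCseq) (n j : ℕ) : Set P.Xpt := {x | x.1 n = some j}

/-- `C_n`, the union of all levels of tower `n`. -/
def tower (P : NFCseq) (n : ℕ) : Set P.Xpt := {x | x.1 n ≠ none}

theorem pmap_zero (P : NFCseq) (n : ℕ) : P.pmap n 0 = some 0 := by
  unfold pmap
  simp [P.hgt_pos n]

/-- The point `𝟎 = (0,0,…)`. -/
def zeroPt (P : NFCseq) : P.Xpt :=
  ⟨fun _ => some 0, fun n => by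
    show some 0 = (some 0).bind (P.pmap n)
    simp [P.pmap_zero n], 0, by simp⟩

/-- `t_n(x) ∈ {1,2,3}`: the subcolumn of tower `n` to which `x` belongs
(junk value `0` if `x` is not in tower `n+1`). -/
def tcol (P : NFCseq) (n : ℕ) (x : P.Xpt) : ℕ :=
  match x.1 (n + 1) with
  | none => 0
  | some j =>
    if j < P.hgt n + P.spa n then 1
    else if j < 2 * P.hgt n + 2 * P.spa n + 1 then 2
    else 3

/-- The index (from `0` to `3^(m-n) - 1`, ordered from bottom to top of tower `m`) of the
occurrence of tower `n` inside tower `m` to which `x` belongs. -/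
def occIdx (P : NFCseq) (n m : ℕ) (x : P.Xpt) : ℕ :=
  ∑ r ∈ Finset.Ico n m, (P.tcol r x - 1) * 3 ^ (r - n)

/-- `x` belongs to one of the first hundred occurrences of tower `n` inside tower `m`. -/
def inFirstHundred (P : NFCseq) (n m : ℕ) (x : P.Xpt) : Prop := P.occIdx n m x < 100

/-- `x` belongs to one of the last hundred occurrences of tower `n` inside tower `m`. -/
def inLastHundred (P : NFCseq) (n m : ℕ) (x : P.Xpt) : Prop :=
  3 ^ (m - n) ≤ P.occIdx n m x + 100

end NFCseq

/-- The nearly finite Chacon transformation `T` together with its invariant measure `μ`. -/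
structure NFC extends NFCseq where
  T : toNFCseq.Xpt → toNFCseq.Xpt
  μ : Measure toNFCseq.Xpt
  T_inj : Function.Injective T
  T_range : Set.range T = {toNFCseq.zeroPt}ᶜ
  T_up : ∀ x : toNFCseq.Xpt, ∃ N : ℕ, ∀ n, N ≤ n →
    ∃ j : ℕ, x.1 n = some j ∧ (T x).1 n = some (j + 1)
  T_meas : Measurable T
  μ_level : ∀ n j : ℕ, j < toNFCseq.hgt n →
    μ (toNFCseq.level n j) = (3 : ℝ≥0∞)⁻¹ ^ n
  μ_pres : MeasurePreserving T μ μ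
  μ_sfin : SigmaFinite μ

namespace NFC

/-- `X^d`. -/
abbrev Xd (S : NFC) (d : ℕ) : Type := Fin d → S.toNFCseq.Xpt

/-- The Cartesian power `T^{×d}`. -/
def Td (S : NFC) (d : ℕ) : S.Xd d → S.Xd d := fun y i => S.T (y i)

/-- `C_n^d`. -/
def towerD (S : NFC) (d n : ℕ) : Set (S.Xd d) := {y | ∀ i, y i ∈ S.toNFCseq.tower n}

/-- `B` is an `n`-box. -/
def IsNBox (S : NFC) (d n : ℕ) (B : Set (S.Xd d)) : Prop :=
  ∃ v : Fin d → ℕ, (∀ i, v i < S.toNFCseq.hgt n) ∧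
    B = {y : S.Xd d | ∀ i, y i ∈ S.toNFCseq.level n (v i)}

/-- A measure on `X^d` is Radon iff it is finite on each `C_n^d`. -/
def IsRadon (S : NFC) (d : ℕ) (σ : Measure (S.Xd d)) : Prop :=
  ∀ n, σ (S.towerD d n) < ⊤

/-- `σ` is `T^{×d}`-invariant. -/
def InvariantD (S : NFC) (d : ℕ) (σ : Measure (S.Xd d)) : Prop :=
  ∀ A : Set (S.Xd d), MeasurableSet A → σ ((S.Td d) ⁻¹' A) = σ A

/-- `T^{-e} A`, the preimage of `A` under `T^e` for `e ∈ ℤ` (image for negative `e`). -/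
def preT (S : NFC) : ℤ → Set S.toNFCseq.Xpt → Set S.toNFCseq.Xpt
  | Int.ofNat k, A => S.T^[k] ⁻¹' A
  | Int.negSucc k, A => S.T^[k + 1] '' A

/-- `σ` is a graph measure arising from powers of `T` on `X^ι`:
`σ(∏ᵢ Aᵢ) = α · μ(⋂ᵢ T^{-eᵢ} Aᵢ)`. -/
def IsGraphMeasure (S : NFC) {ι : Type} (σ : Measure (ι → S.toNFCseq.Xpt)) : Prop :=
  ∃ α : ℝ≥0∞, 0 < α ∧ α ≠ ⊤ ∧ ∃ e : ι → ℤ,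
    ∀ A : ι → Set S.toNFCseq.Xpt, (∀ i, MeasurableSet (A i)) →
      σ (Set.univ.pi A) = α * S.μ (⋂ i, S.preT (e i) (A i))

/-- `σ = σ^{D_1} ⊗ ⋯ ⊗ σ^{D_r}` for a partition `D_1, …, D_r` of `{1,…,d}` where each
`σ^{D_j}` is a graph measure on `X^{D_j}` arising from powers of `T`. -/
def IsProductOfGraphMeasures (S : NFC) (d : ℕ) (σ : Measure (S.Xd d)) : Prop :=
  ∃ (r : ℕ) (D : Fin r → Finset (Fin d)),
    (∀ j, (D j).Nonempty) ∧
    (∀ j j', j ≠ j' → Disjoint (D j) (D j')) ∧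
    (∀ i : Fin d, ∃ j, i ∈ D j) ∧
    ∃ σD : ∀ j : Fin r, Measure ({i // i ∈ D j} → S.toNFCseq.Xpt),
      (∀ j, S.IsGraphMeasure (σD j)) ∧
      ∀ A : Fin d → Set S.toNFCseq.Xpt, (∀ i, MeasurableSet (A i)) →
        σ (Set.univ.pi A) =
          ∏ j : Fin r, σD j (Set.univ.pi fun i : {i // i ∈ D j} => A i.1)

end NFC


/-- `(T)^j W` for `j ∈ ℤ`: forward images for `j ≥ 0`, preimages for `j < 0`. -/
def iterZ {α : Type*} (f : α → α) : ℤ → Set α → Set α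
  | Int.ofNat k, A => f^[k] '' A
  | Int.negSucc k, A => f^[k + 1] ⁻¹' A

namespace NFC

/-- `σ` is totally dissipative: there is a wandering set `W` whose `ℤ`-orbit covers
`X^d` up to a `σ`-null set. -/
def TotallyDissipative (S : NFC) (d : ℕ) (σ : Measure (S.Xd d)) : Prop :=
  ∃ W : Set (S.Xd d), MeasurableSet W ∧
    (∀ j j' : ℤ, j ≠ j' → Disjoint (iterZ (S.Td d) j W) (iterZ (S.Td d) j' W)) ∧
    σ (⋃ j : ℤ, iterZ (S.Td d) j W)ᶜ = 0

/-- The ring `𝓡` of finite unions of `n`-boxes. -/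
def BoxRing (S : NFC) (d : ℕ) : Set (Set (S.Xd d)) :=
  {B | ∃ n : ℕ, ∃ 𝔅 : Finset (Set (S.Xd d)), (∀ b ∈ 𝔅, S.IsNBox d n b) ∧ B = ⋃₀ ↑𝔅}

/-- Convergence of a sequence of Radon measures on `X^d`. -/
def RTendsto (S : NFC) (d : ℕ) (σk : ℕ → Measure (S.Xd d)) (σ : Measure (S.Xd d)) : Prop :=
  ∀ n : ℕ, 0 < σ (S.towerD d n) →
    (∀ᶠ k in atTop, 0 < σk k (S.towerD d n)) ∧
    ∀ B : Set (S.Xd d), S.IsNBox d n B →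
      Tendsto (fun k => σk k B / σk k (S.towerD d n)) atTop
        (𝓝 (σ B / σ (S.towerD d n)))

/-- The edge `∂C_n^d` of `C_n^d`. -/
def edgeD (S : NFC) (d n : ℕ) : Set (S.Xd d) :=
  {y | y ∈ S.towerD d n ∧ ∃ i, y i ∈ S.toNFCseq.level n 0 ∨
    y i ∈ S.toNFCseq.level n (S.toNFCseq.hgt n - 1)}

/-- `Ω_m`: the union of all `m`-boxes `L_m^{j_1} × ⋯ × L_m^{j_d}` with `j_i ≠ 0` for all `i`. -/
def OmegaD (S : NFC) (d m : ℕ) : Set (S.Xd d) :=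
  {y | ∀ i, ∃ j : ℕ, j ≠ 0 ∧ j < S.toNFCseq.hgt m ∧ y i ∈ S.toNFCseq.level m j}

/-- A twisting transformation on `X^d`: it applies `T` to the coordinates in a nonempty
proper subset `G_1 ⊆ {1,…,d}` and the identity to the others. -/
def IsTwist (S : NFC) (d : ℕ) (Sw : S.Xd d → S.Xd d) : Prop :=
  ∃ G : Fin d → Bool, (∃ i, G i = true) ∧ (∃ i, G i = false) ∧
    ∀ (y : S.Xd d) (i : Fin d), Sw y i = if G i then S.T (y i) else y i

/-- The empirical measure `γ_J = ∑_{j ∈ J} δ_{(T^{×d})^j x}` along a two-sided orbit `o`. -/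
def emp (S : NFC) (d : ℕ) (o : ℤ → S.Xd d) (J : Finset ℤ) : Measure (S.Xd d) :=
  ∑ j ∈ J, Measure.dirac (o j)

end NFC

/-- `J` is a (nonempty finite) interval of `ℤ`. -/
def IsIntervalZ (J : Finset ℤ) : Prop := ∃ a b : ℤ, a ≤ b ∧ J = Finset.Icc a b

namespace NFC

/-- `J` is an `n`-crossing for the orbit `o` of a point of `X^d`: a maximal interval on which
the orbit stays in `C_n^d` with all the `t_n(T^j x_i)` constant. -/
def IsCrossing (S : NFC) (d : ℕ) (o : ℤ → S.Xd d) (n : ℕ) (J : Finset ℤ) : Prop :=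
  IsIntervalZ J ∧
  (∀ j ∈ J, o j ∈ S.towerD d n) ∧
  (∀ i : Fin d, ∀ j ∈ J, ∀ j' ∈ J, S.toNFCseq.tcol n (o j i) = S.toNFCseq.tcol n (o j' i)) ∧
  ∀ J' : Finset ℤ, J ⊆ J' → IsIntervalZ J' →
    (∀ j ∈ J', o j ∈ S.towerD d n) →
    (∀ i : Fin d, ∀ j ∈ J', ∀ j' ∈ J', S.toNFCseq.tcol n (o j i) = S.toNFCseq.tcol n (o j' i)) →
    J' = J

/-- An `n`-crossing is synchronized if `t_n(T^j x_1) = ⋯ = t_n(T^j x_d)` on it. -/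
def IsSync (S : NFC) (d : ℕ) (o : ℤ → S.Xd d) (n : ℕ) (J : Finset ℤ) : Prop :=
  ∀ j ∈ J, ∀ i i' : Fin d, S.toNFCseq.tcol n (o j i) = S.toNFCseq.tcol n (o j i')

end NFC

/-- The interval `I_n` of length `h_n` centered at `0`. -/
def Imid (P : NFCseq) (n : ℕ) : Finset ℤ :=
  Finset.Icc (-((P.hgt n / 2 : ℕ) : ℤ)) (-((P.hgt n / 2 : ℕ) : ℤ) + P.hgt n - 1)

namespace NFC

/-- A substantial `n`-crossing: an `n`-crossing whose intersection with `I_n` has at least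
`η·h_n` elements. -/
def IsSubstantial (S : NFC) (d : ℕ) (o : ℤ → S.Xd d) (η : ℝ) (n : ℕ) (J : Finset ℤ) : Prop :=
  S.IsCrossing d o n J ∧ η * S.toNFCseq.hgt n ≤ ((J ∩ Imid S.toNFCseq n).card : ℝ)

/-- `x_i` climbs into tower `n` along the interval `I`. -/
def Climbs (S : NFC) (d : ℕ) (o : ℤ → S.Xd d) (i : Fin d) (n : ℕ) (I : Finset ℤ) : Prop :=
  (∀ j ∈ I, (o j) i ∈ S.toNFCseq.tower n) ∧
  ¬ ∃ j : ℤ, j ∈ I ∧ j + 1 ∈ I ∧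
      (o j) i ∈ S.toNFCseq.level n (S.toNFCseq.hgt n - 1) ∧
      (o (j + 1)) i ∈ S.toNFCseq.level n 0

end NFC

/-- The nearly finite Chacon system together with the conull set `X_∞` and the function
`x ↦ ℓ(x)` of Lemma 2.3. -/
structure NFCX extends NFC where
  Xinf : Set toNFCseq.Xpt
  ellx : toNFCseq.Xpt → ℕ
  Xinf_conull : μ Xinfᶜ = 0
  Xinf_spec : ∀ x ∈ Xinf, ∀ ℓ : ℕ, ellx x ≤ ℓ → ∀ n : ℕ,
    nseq (ℓ - 1) ≤ n → n + ℓ ≤ nseq ℓ →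
      x ∈ toNFCseq.tower n ∧ ¬ toNFCseq.inFirstHundred n (nseq ℓ) x ∧
        ¬ toNFCseq.inLastHundred n (nseq ℓ) x

namespace NFCX

/-- `o` is the two-sided orbit of a `σ`-typical point `x = o 0` (satisfying
conditions (1), (2) and (3) of Section 3.4 of the paper). -/
def IsTypicalOrbit (S : NFCX) (d : ℕ) (σ : Measure (S.toNFC.Xd d))
    (o : ℤ → S.toNFC.Xd d) : Prop :=
  (∀ j : ℤ, S.toNFC.Td d (o j) = o (j + 1)) ∧
  (∀ j : ℤ, ∀ n : ℕ, 0 < σ (S.toNFC.towerD d n) →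
    ∀ B : Set (S.toNFC.Xd d), S.toNFC.IsNBox d n B →
    ∀ a b : ℕ → ℤ, (∀ k, a k ≤ 0) → (∀ k, 0 ≤ b k) →
      Tendsto (fun k => b k - a k) atTop atTop →
      Tendsto (fun k =>
          (((Finset.Icc (a k) (b k)).filter (fun j' => o (j + j') ∈ B)).card : ℝ) /
            (((Finset.Icc (a k) (b k)).filter
              (fun j' => o (j + j') ∈ S.toNFC.towerD d n)).card : ℝ))
        atTop (𝓝 ((σ B).toReal / (σ (S.toNFC.towerD d n)).toReal))) ∧
  (∀ n : ℕ, ∀ B : Set (S.toNFC.Xd d), S.toNFC.IsNBox d n B → o 0 ∈ B → 0 < σ B) ∧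
  (∀ i : Fin d, (o 0) i ∈ S.Xinf)

end NFCX

/-! ## Subsets of `ℤ` of order `ℓ` inside an interval -/

/-- A piece of `F ∩ I`: a maximal interval included in `F ∩ I`. -/
def IsPieceZ (F : Set ℤ) (I : Finset ℤ) (J : Finset ℤ) : Prop :=
  IsIntervalZ J ∧ (↑J : Set ℤ) ⊆ F ∩ ↑I ∧
    ∀ J' : Finset ℤ, IsIntervalZ J' → (↑J' : Set ℤ) ⊆ F ∩ ↑I → J ⊆ J' → J' = J

/-- A hole of `F ∩ I`: a maximal interval included in `I \ F`. -/
def IsHoleZ (F : Set ℤ) (I : Finset ℤ) (J : Finset ℤ) : Prop :=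
  IsIntervalZ J ∧ (↑J : Set ℤ) ⊆ (↑I : Set ℤ) \ F ∧
    ∀ J' : Finset ℤ, IsIntervalZ J' → (↑J' : Set ℤ) ⊆ (↑I : Set ℤ) \ F → J ⊆ J' → J' = J

/-- Each hole of `F ∩ I` has size at most `s`. -/
def HolesSmall (F : Set ℤ) (I : Finset ℤ) (s : ℕ) : Prop :=
  ∀ H : Finset ℤ, IsHoleZ F I H → H.card ≤ s

/-- Two consecutive holes of `F ∩ I` are always separated by a piece of size at least `c`. -/
def HolesSeparated (F : Set ℤ) (I : Finset ℤ) (c : ℕ) : Prop :=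
  ∀ H₁ H₂ : Finset ℤ, IsHoleZ F I H₁ → IsHoleZ F I H₂ →
    (∀ a ∈ H₁, ∀ b ∈ H₂, a < b) →
    ∃ J : Finset ℤ, IsPieceZ F I J ∧ c ≤ J.card ∧ ∀ a ∈ H₁, ∀ b ∈ H₂, ∀ x ∈ J, a < x ∧ x < b

/-- `F` is of order `ℓ ≥ 1` inside the interval `I`, with respect to the sequences `c`, `s`. -/
def IsOrder (c s : ℕ → ℕ) : ℕ → Set ℤ → Finset ℤ → Prop
  | 0, _, _ => False
  | 1, F, I => HolesSmall F I (s 1) ∧ HolesSeparated F I (c 1)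
  | (ℓ + 2), F, I => ∃ F' : Set ℤ, F ⊆ F' ∧ HolesSmall F' I (s (ℓ + 2)) ∧
      HolesSeparated F' I (c (ℓ + 2)) ∧
      ∀ J : Finset ℤ, IsPieceZ F' I J → IsOrder c s (ℓ + 1) F J

/-- `p_1`: the smallest integer such that `3^{p_1} > 2d+1` and `p_1 > d`. -/
def pOne (d : ℕ) : ℕ := sInf {p : ℕ | 2 * d + 1 < 3 ^ p ∧ d < p}

/-- `p_2`: the smallest integer such that `1/3^{p_2} < η/3`. -/
def pTwo (η : ℝ) : ℕ := sInf {p : ℕ | ((3 : ℝ) ^ p)⁻¹ < η / 3}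


namespace NFCseq

/-! ### Heights and spacers -/

theorem hgt_succ (P : NFCseq) (n : ℕ) :
    P.hgt (n + 1) = 3 * P.hgt n + 3 * P.spa n + 1 := by
  rw [hgt]; rfl

theorem hgt_mul_pow_le (P : NFCseq) (n k : ℕ) : P.hgt n * 3 ^ k ≤ P.hgt (n + k) := by
  induction k with
  | zero => simp
  | succ k ih =>
    have := P.hgt_succ (n + k)
    rw [← add_assoc, this, pow_succ]
    nlinarith

theorem nseq_strictMono (P : NFCseq) : StrictMono P.nseq :=
  strictMono_nat_of_lt_succ fun n => by
    have := P.nseq_growth (n + 1) (by omega)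
    simp only [Nat.add_sub_cancel] at this
    omega

theorem spa_nseq (P : NFCseq) {m : ℕ} (hm : 1 ≤ m) :
    P.spa (P.nseq m) = P.hgt (P.nseq m - P.kOf m) := by
  have hn : ∃ ℓ, 1 ≤ ℓ ∧ P.nseq ℓ = P.nseq m := ⟨m, hm, rfl⟩
  have h : Nat.find hn = m := P.nseq_strictMono.injective (Nat.find_spec hn).2
  unfold spa
  rw [dif_pos hn, h]

theorem spa_nseq_pos (P : NFCseq) {m : ℕ} (hm : 1 ≤ m) : 1 ≤ P.spa (P.nseq m) := by
  rw [P.spa_nseq hm]; exact P.hgt_pos _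

theorem spa_eq_zero (P : NFCseq) {m n : ℕ} (h1 : P.nseq m < n) (h2 : n < P.nseq (m + 1)) :
    P.spa n = 0 := by
  unfold spa
  rw [dif_neg]
  rintro ⟨ℓ, -, rfl⟩
  have := P.nseq_strictMono.lt_iff_lt.1 h1
  have := P.nseq_strictMono.lt_iff_lt.1 h2
  omega

theorem kOf_le (P : NFCseq) {m : ℕ} (hm : 1 ≤ m) : P.kOf m ≤ m := by
  apply csSup_le ⟨0, by simpa [P.lseq_zero] using hm⟩
  intro k hk
  exact (P.lseq_strictMono.id_le k).trans hk

theorem le_kOf (P : NFCseq) {m k : ℕ} (h : P.lseq k ≤ m) : k ≤ P.kOf m :=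
  le_csSup ⟨m, fun k hk => (P.lseq_strictMono.id_le k).trans hk⟩ h

/-- The spacers added at step `n_m + 1` are short compared with tower `n_m`: their relative
height is of order `3^(-k(m))`, and `k(m)` tends to infinity. -/
theorem spa_small (P : NFCseq) (ε : ℝ) (hε : 0 < ε) :
    ∃ L : ℕ, ∀ m, L ≤ m → ((P.spa (P.nseq m) : ℝ) + 2) ≤ ε * P.hgt (P.nseq m) := by
  obtain ⟨k, hk⟩ := exists_pow_lt_of_lt_one (show (0 : ℝ) < ε / 3 by positivity)
    (show (1 / 3 : ℝ) < 1 by norm_num)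
  refine ⟨P.lseq k + 1, fun m hm => ?_⟩
  have hm1 : 1 ≤ m := by omega
  have hkm : k ≤ P.kOf m := P.le_kOf (by omega)
  have hle : P.kOf m ≤ P.nseq m := (P.kOf_le hm1).trans (P.nseq_strictMono.id_le m)
  have h1 := P.hgt_mul_pow_le (P.nseq m - P.kOf m) (P.kOf m)
  rw [Nat.sub_add_cancel hle, ← P.spa_nseq hm1] at h1
  have h2 : P.spa (P.nseq m) * 3 ^ k ≤ P.hgt (P.nseq m) :=
    (Nat.mul_le_mul_left _ (Nat.pow_le_pow_right (by norm_num) hkm)).trans h1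
  have h3 : (P.spa (P.nseq m) : ℝ) * 3 ^ k ≤ P.hgt (P.nseq m) := by exact_mod_cast h2
  have h4 : (1 : ℝ) ≤ P.spa (P.nseq m) := by exact_mod_cast P.spa_nseq_pos hm1
  have h5 : 1 ≤ ε / 3 * 3 ^ k := by
    rw [one_div, inv_pow, inv_lt_iff_one_lt_mul₀ (by positivity)] at hk
    linarith
  have h6 : (P.spa (P.nseq m) : ℝ) ≤ ε / 3 * P.hgt (P.nseq m) := by
    calc (P.spa (P.nseq m) : ℝ) ≤ P.spa (P.nseq m) * (ε / 3 * 3 ^ k) :=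
          le_mul_of_one_le_right (by positivity) h5
      _ = ε / 3 * (P.spa (P.nseq m) * 3 ^ k) := by ring
      _ ≤ _ := by gcongr
  linarith

theorem hgt_nseq_ratio (P : NFCseq) (m : ℕ) :
    P.hgt (P.nseq m) * 9 ^ (m + 1) ≤ P.hgt (P.nseq (m + 1)) := by
  have h := P.nseq_growth (m + 1) (by omega)
  simp only [Nat.add_sub_cancel] at h
  have h1 := P.hgt_mul_pow_le (P.nseq m) (P.nseq (m + 1) - P.nseq m)
  rw [Nat.add_sub_cancel' (by omega)] at h1
  refine le_trans (Nat.mul_le_mul_left _ ?_) h1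
  calc 9 ^ (m + 1) = 3 ^ (2 * (m + 1)) := by rw [pow_mul]; norm_num
    _ ≤ _ := Nat.pow_le_pow_right (by norm_num) (by omega)

/-! ### The projections between successive towers -/

/-- The three ways a level of tower `n+1` can lie in tower `n`. -/
theorem pmap_eq_some (P : NFCseq) {n b a : ℕ} (h : P.pmap n b = some a) :
    a < P.hgt n ∧ (b = a ∨ b = a + (P.hgt n + P.spa n) ∨
      b = a + (2 * P.hgt n + 2 * P.spa n + 1)) := by
  unfold pmap at h
  split_ifs at h <;> simp only [Option.some.injEq] at h <;> omega

theorem pmap_first (P : NFCseq) {n a : ℕ} (h : a < P.hgt n) : P.pmap n a = some a := by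
  unfold pmap
  rw [if_pos h]

theorem pmap_second (P : NFCseq) {n a : ℕ} (h : a < P.hgt n) :
    P.pmap n (a + (P.hgt n + P.spa n)) = some a := by
  unfold pmap
  rw [if_neg (by omega), if_neg (by omega), if_pos (by omega)]
  simp

theorem pmap_third (P : NFCseq) {n a : ℕ} (h : a < P.hgt n) :
    P.pmap n (a + (2 * P.hgt n + 2 * P.spa n + 1)) = some a := by
  unfold pmap
  rw [if_neg (by omega), if_neg (by omega), if_neg (by omega), if_neg (by omega),
    if_pos (by omega)]
  simp

theorem pmap_succ (P : NFCseq) {n b a : ℕ} (h : P.pmap n b = some a) (ha : a + 1 < P.hgt n) :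
    P.pmap n (b + 1) = some (a + 1) := by
  obtain ⟨-, rfl | rfl | rfl⟩ := P.pmap_eq_some h
  · exact P.pmap_first ha
  · rw [show a + (P.hgt n + P.spa n) + 1 = (a + 1) + (P.hgt n + P.spa n) by ring]
    exact P.pmap_second ha
  · rw [show a + (2 * P.hgt n + 2 * P.spa n + 1) + 1
      = (a + 1) + (2 * P.hgt n + 2 * P.spa n + 1) by ring]
    exact P.pmap_third ha

theorem pmap_pred (P : NFCseq) {n b a : ℕ} (h : P.pmap n b = some (a + 1)) :
    ∃ b', b = b' + 1 ∧ P.pmap n b' = some a := by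
  obtain ⟨ha, rfl | rfl | rfl⟩ := P.pmap_eq_some h
  · exact ⟨a, rfl, P.pmap_first (by omega)⟩
  · exact ⟨a + (P.hgt n + P.spa n), by ring, P.pmap_second (by omega)⟩
  · exact ⟨a + (2 * P.hgt n + 2 * P.spa n + 1), by ring, P.pmap_third (by omega)⟩

theorem exists_up (P : NFCseq) (x : P.Xpt) {n a : ℕ} (h : x.1 n = some a) :
    ∃ b, x.1 (n + 1) = some b ∧ P.pmap n b = some a := by
  have := x.2.1 n
  rw [h] at this
  exact Option.bind_eq_some_iff.1 this.symm

theorem down (P : NFCseq) (x : P.Xpt) {n b : ℕ} (h : x.1 (n + 1) = some b) :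
    x.1 n = P.pmap n b := by
  rw [x.2.1 n, h]; rfl

theorem lt_hgt (P : NFCseq) (x : P.Xpt) {n a : ℕ} (h : x.1 n = some a) : a < P.hgt n := by
  obtain ⟨b, -, hb⟩ := P.exists_up x h
  exact (P.pmap_eq_some hb).1

theorem tower_mono (P : NFCseq) {n m : ℕ} (h : n ≤ m) : P.tower n ⊆ P.tower m := by
  intro x hx
  induction m, h using Nat.le_induction with
  | base => exact hx
  | succ m _ ih =>
    obtain ⟨a, ha⟩ := Option.ne_none_iff_exists'.1 ih
    obtain ⟨b, hb, -⟩ := P.exists_up x ha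
    simp [tower, hb]

theorem zero_down (P : NFCseq) (x : P.Xpt) {n m : ℕ} (h : n ≤ m) (hx : x.1 m = some 0) :
    x.1 n = some 0 := by
  induction m, h using Nat.le_induction with
  | base => exact hx
  | succ m _ ih => exact ih (by rw [P.down x hx, P.pmap_zero])

end NFCseq

namespace NFC

/-! ### Motion of a point inside a tower -/

/-- Below the top of tower `n`, `T` moves one level up; and a point of tower `n` that is not on
its bottom level comes from the level just below. Both hold for high towers and descend from
tower `n+1` to tower `n`. -/
theorem T_step (S : NFC) (x : S.toNFCseq.Xpt) (n : ℕ) :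
    (∀ a, x.1 n = some a → a + 1 < S.hgt n → (S.T x).1 n = some (a + 1)) ∧
    (∀ a, (S.T x).1 n = some (a + 1) → x.1 n = some a) := by
  obtain ⟨N, hN⟩ := S.T_up x
  suffices h : ∀ k n, N ≤ n + k →
      (∀ a, x.1 n = some a → a + 1 < S.hgt n → (S.T x).1 n = some (a + 1)) ∧
      (∀ a, (S.T x).1 n = some (a + 1) → x.1 n = some a) from h N n (by omega)
  intro k
  induction k with
  | zero =>
    intro n hn
    obtain ⟨j, h1, h2⟩ := hN n hn
    rw [h1, h2]
    constructor
    · intro a ha _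
      simp only [Option.some.injEq] at ha ⊢
      omega
    · intro a ha
      simp only [Option.some.injEq] at ha ⊢
      omega
  | succ k ih =>
    intro n hn
    obtain ⟨i1, i2⟩ := ih (n + 1) (by omega)
    constructor
    · intro a ha hlt
      obtain ⟨b, hb, hp⟩ := S.exists_up x ha
      have hb' : b + 1 < S.hgt (n + 1) := by
        rw [S.hgt_succ]
        have := S.pmap_eq_some hp
        omega
      rw [S.down _ (i1 b hb hb')]
      exact S.pmap_succ hp hlt
    · intro a ha
      obtain ⟨b, hb, hp⟩ := S.exists_up _ ha
      obtain ⟨b', rfl, hb'⟩ := S.pmap_pred hp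
      rw [S.down _ (i2 b' hb)]
      exact hb'

/-- A point entering tower `n` enters it through the bottom level. -/
theorem entry (S : NFC) (x : S.toNFCseq.Xpt) {n : ℕ} (h1 : x ∉ S.tower n)
    (h2 : S.T x ∈ S.tower n) : (S.T x).1 n = some 0 := by
  obtain ⟨a, ha⟩ := Option.ne_none_iff_exists'.1 h2
  cases a with
  | zero => exact ha
  | succ a =>
    refine absurd ?_ h1
    simp [NFCseq.tower, (S.T_step x n).2 a ha]

/-- When spacers are put above every subcolumn of tower `n`, a point cannot pass directly from
one occurrence of tower `n` to another one. -/
theorem stay (S : NFC) (x : S.toNFCseq.Xpt) {n a : ℕ} (hs : 1 ≤ S.spa n)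
    (h1 : x.1 n = some a) (h2 : S.T x ∈ S.tower n) :
    a + 1 < S.hgt n ∧ S.tcol n (S.T x) = S.tcol n x := by
  obtain ⟨b, hb, hp⟩ := S.exists_up x h1
  have hc := S.pmap_eq_some hp
  have hb' : b + 1 < S.hgt (n + 1) := by rw [S.hgt_succ]; omega
  have hT := (S.T_step x (n + 1)).1 b hb hb'
  obtain ⟨a', ha'⟩ := Option.ne_none_iff_exists'.1 h2
  have hp' := ha'
  rw [S.down _ hT] at hp'
  have hc' := S.pmap_eq_some hp'
  refine ⟨by omega, ?_⟩
  unfold NFCseq.tcol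
  rw [hT, hb]
  dsimp only
  split_ifs <;> omega

/-! ### Holes, starts and crossings along an orbit -/

theorem orbit_up (S : NFC) (u : ℤ → S.toNFCseq.Xpt) (hu : ∀ j, S.T (u j) = u (j + 1))
    {n b : ℕ} {j : ℤ} (h : (u j).1 n = some b) (t : ℕ) (ht : b + t < S.hgt n) :
    (u (j + t)).1 n = some (b + t) := by
  induction t with
  | zero => simpa using h
  | succ t ih =>
    have := (S.T_step (u (j + t)) n).1 _ (ih (by omega)) (by omega)
    rw [hu] at this
    push_cast
    rw [← add_assoc, this, add_assoc]

/-- Inside tower `n`, where `n_m < n ≤ n_{m+1}`, a hole of tower `n_m` is followed within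
`s + 2` steps by the bottom of tower `n_m`, unless the top of tower `n` comes first. Here `s` is
the number of spacers above each subcolumn at step `n_m + 1`; later cuttings only insert single
spacers. -/
theorem hole_dist_aux (S : NFC) (u : ℤ → S.toNFCseq.Xpt) (hu : ∀ j, S.T (u j) = u (j + 1))
    {m : ℕ} (n : ℕ) (hn : S.nseq m + 1 ≤ n) (hn' : n ≤ S.nseq (m + 1)) :
    ∀ (j : ℤ) (b : ℕ), (u j).1 n = some b → (u j).1 (S.nseq m) = none →
      (∃ t : ℕ, 1 ≤ t ∧ t ≤ S.spa (S.nseq m) + 2 ∧ b + t < S.hgt n ∧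
        (u (j + t)).1 (S.nseq m) = some 0) ∨ S.hgt n ≤ b + S.spa (S.nseq m) + 1 := by
  induction n, hn using Nat.le_induction with
  | base =>
    intro j b hb hN
    rw [S.down _ hb] at hN
    have hlt := S.lt_hgt _ hb
    rw [S.hgt_succ] at hlt ⊢
    set N := S.nseq m
    have hpos := S.hgt_pos N
    unfold NFCseq.pmap at hN
    split_ifs at hN with h1 h2 h3 h4 h5
    · left
      refine ⟨S.hgt N + S.spa N - b, by omega, by omega, by omega, ?_⟩
      have := S.orbit_up u hu hb (S.hgt N + S.spa N - b) (by rw [S.hgt_succ]; omega)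
      rw [S.down _ this, Nat.add_sub_cancel' (by omega)]
      simpa using S.pmap_second hpos
    · left
      refine ⟨2 * S.hgt N + 2 * S.spa N + 1 - b, by omega, by omega, by omega, ?_⟩
      have := S.orbit_up u hu hb (2 * S.hgt N + 2 * S.spa N + 1 - b)
        (by rw [S.hgt_succ]; omega)
      rw [S.down _ this, Nat.add_sub_cancel' (by omega)]
      simpa using S.pmap_third hpos
    · right
      omega
  | succ n hn ih =>
    intro j b hb hN
    have ih := ih (by omega)
    have hs : S.spa n = 0 := S.spa_eq_zero (m := m) (by omega) (by omega)
    have hlt := S.lt_hgt _ hb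
    have hH := S.hgt_succ n
    have hpos := S.hgt_pos n
    have key : ∀ t c : ℕ, b + t = c → c < S.hgt (n + 1) → S.pmap n c = some 0 →
        (u (j + t)).1 (S.nseq m) = some 0 := by
      intro t c hc hlt' hp
      have := S.orbit_up u hu hb t (by omega)
      refine S.zero_down _ (show S.nseq m ≤ n by omega) ?_
      rw [S.down _ this, hc, hp]
    have hq2 : S.pmap n (S.hgt n) = some 0 := by simpa [hs] using S.pmap_second hpos
    have hq3 : S.pmap n (2 * S.hgt n + 1) = some 0 := by simpa [hs] using S.pmap_third hpos
    cases ha : S.pmap n b with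
    | none =>
      have hb2 : b = 2 * S.hgt n := by
        unfold NFCseq.pmap at ha
        split_ifs at ha <;> omega
      exact Or.inl ⟨1, le_rfl, by omega, by omega, key 1 _ (by omega) (by omega) hq3⟩
    | some a =>
      have hua : (u j).1 n = some a := by rw [S.down _ hb, ha]
      have hc := S.pmap_eq_some ha
      rcases ih j a hua hN with ⟨t, t1, t2, t3, t4⟩ | hend
      · exact Or.inl ⟨t, t1, t2, by omega, t4⟩
      · obtain ⟨hac, rfl | rfl | rfl⟩ := hc
        · exact Or.inl ⟨S.hgt n - b, by omega, by omega, by omega,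
            key _ _ (Nat.add_sub_cancel' hac.le) (by omega) hq2⟩
        · exact Or.inl ⟨S.hgt n + 1 - a, by omega, by omega, by omega,
            key _ (2 * S.hgt n + 1) (by omega) (by omega) hq3⟩
        · right
          omega

/-- An orbit segment contained in tower `n` does not go beyond its top. -/
theorem orbit_stay (S : NFC) (u : ℤ → S.toNFCseq.Xpt) (hu : ∀ j, S.T (u j) = u (j + 1))
    {n b : ℕ} (hs : 1 ≤ S.spa n) {j : ℤ} (h : (u j).1 n = some b) (t : ℕ)
    (ht : ∀ r : ℕ, r ≤ t → u (j + r) ∈ S.tower n) : b + t < S.hgt n := by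
  induction t with
  | zero => simpa using S.lt_hgt _ h
  | succ t ih =>
    have ih := ih fun r hr => ht r (by omega)
    have h1 := S.orbit_up u hu h t ih
    refine (S.stay _ hs h1 ?_).1
    rw [hu, add_assoc]
    exact_mod_cast ht (t + 1) le_rfl

/-- Each hole of tower `n_m` met along an interval `[p, q]` spent in tower `n_{m+1}` is at
distance at most `s + 2` from either a later bottom of tower `n_m` or the end of the interval. -/
theorem hole_dist (S : NFC) (u : ℤ → S.toNFCseq.Xpt) (hu : ∀ j, S.T (u j) = u (j + 1))
    {m : ℕ} {p q : ℤ} (hM : ∀ j ∈ Finset.Icc p q, u j ∈ S.tower (S.nseq (m + 1)))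
    {j : ℤ} (hj : j ∈ Finset.Icc p q) (hN : u j ∉ S.tower (S.nseq m)) :
    ∃ a : ℤ, (a = q + 1 ∨ a ∈ Finset.Icc p q ∧ (u a).1 (S.nseq m) = some 0) ∧
      a - (S.spa (S.nseq m) + 2 : ℕ) ≤ j ∧ j < a := by
  obtain ⟨b, hb⟩ := Option.ne_none_iff_exists'.1 (hM j hj)
  have hN' : (u j).1 (S.nseq m) = none := by simpa [NFCseq.tower] using hN
  have hlt : S.nseq m < S.nseq (m + 1) := S.nseq_strictMono (Nat.lt_succ_self m)
  rw [Finset.mem_Icc] at hj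
  rcases S.hole_dist_aux u hu (S.nseq (m + 1)) (by omega) le_rfl j b hb hN' with
    ⟨t, t1, t2, -, t4⟩ | hend
  · by_cases hq : j + t ≤ q
    · exact ⟨j + t, Or.inr ⟨Finset.mem_Icc.2 ⟨by omega, hq⟩, t4⟩, by push_cast; omega,
        by omega⟩
    · exact ⟨q + 1, Or.inl rfl, by push_cast; omega, by omega⟩
  · have := S.orbit_stay u hu (S.spa_nseq_pos (m := m + 1) (by omega)) hb (q - j).toNat
      fun r hr => hM _ (Finset.mem_Icc.2 ⟨by omega, by omega⟩)
    exact ⟨q + 1, Or.inl rfl, by push_cast; omega, by omega⟩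

/-- The times of `I` at which some coordinate is at the bottom of tower `n`. -/
def starts (S : NFC) (d : ℕ) (o : ℤ → S.Xd d) (n : ℕ) (I : Finset ℤ) : Finset ℤ :=
  I.filter fun j => ∃ i, (o j i).1 n = some 0

/-- Two passages at the bottom of tower `n` are at least `h_n` apart, hence are rare. -/
theorem card_starts (S : NFC) (d : ℕ) (o : ℤ → S.Xd d) (ho : ∀ j, S.Td d (o j) = o (j + 1))
    (n : ℕ) {p q : ℤ} (hpq : p ≤ q) :
    (S.starts d o n (Finset.Icc p q)).card * S.hgt n
      ≤ d * ((Finset.Icc p q).card + S.hgt n) := by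
  have hu : ∀ i j, S.T (o j i) = o (j + 1) i := fun i j => congrFun (ho j) i
  set A : Fin d → Finset ℤ := fun i => (Finset.Icc p q).filter fun j => (o j i).1 n = some 0
  have hA : ∀ i, (A i).card * S.hgt n ≤ (Finset.Icc p q).card + S.hgt n := by
    intro i
    have hdisj : ((A i : Finset ℤ) : Set ℤ).PairwiseDisjoint
        fun a => Finset.Ico a (a + S.hgt n) := by
      have key : ∀ a ∈ A i, ∀ b ∈ A i, a < b → a + S.hgt n ≤ b := by
        intro a ha b hb hab
        by_contra hlt
        have h1 := S.orbit_up (fun j => o j i) (hu i) (Finset.mem_filter.1 ha).2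
          (b - a).toNat (by omega)
        rw [show a + ((b - a).toNat : ℤ) = b by omega, (Finset.mem_filter.1 hb).2] at h1
        simp only [Option.some.injEq] at h1
        omega
      intro a ha b hb hab
      rw [Function.onFun, Finset.disjoint_left]
      intro x hx hx'
      rw [Finset.mem_Ico] at hx hx'
      rcases lt_or_gt_of_ne hab with h | h
      · have := key a ha b hb h
        omega
      · have := key b hb a ha h
        omega
    have hsub : (A i).biUnion (fun a => Finset.Ico a (a + S.hgt n))
        ⊆ Finset.Ico p (q + 1 + S.hgt n) := by
      intro x hx
      obtain ⟨a, ha, hx⟩ := Finset.mem_biUnion.1 hx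
      have := Finset.mem_Icc.1 (Finset.mem_filter.1 ha).1
      rw [Finset.mem_Ico] at hx ⊢
      omega
    have := Finset.card_le_card hsub
    rw [Finset.card_biUnion hdisj] at this
    simp only [Int.card_Ico, add_sub_cancel_left, Int.toNat_natCast, Finset.sum_const,
      smul_eq_mul] at this
    refine this.trans ?_
    rw [Int.card_Icc]
    omega
  have hU : S.starts d o n (Finset.Icc p q) = Finset.univ.biUnion A := by
    ext j
    simp [starts, A]
  rw [hU]
  calc (Finset.univ.biUnion A).card * S.hgt n ≤ (∑ i, (A i).card) * S.hgt n :=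
        Nat.mul_le_mul_right _ Finset.card_biUnion_le
    _ = ∑ i, (A i).card * S.hgt n := Finset.sum_mul _ _ _
    _ ≤ ∑ _i : Fin d, ((Finset.Icc p q).card + S.hgt n) := Finset.sum_le_sum fun i _ => hA i
    _ = _ := by simp

/-- The orbit enters `C_n^d` only at a time when some coordinate is at the bottom of tower `n`. -/
theorem entryD (S : NFC) (d : ℕ) (o : ℤ → S.Xd d) (ho : ∀ j, S.Td d (o j) = o (j + 1))
    {n : ℕ} {j : ℤ} (h1 : o (j - 1) ∉ S.towerD d n) (h2 : o j ∈ S.towerD d n) :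
    ∃ i, (o j i).1 n = some 0 := by
  simp only [towerD, mem_ofPred_eq, not_forall] at h1
  obtain ⟨i, hi⟩ := h1
  have hT : S.T (o (j - 1) i) = o j i := by
    have := congrFun (ho (j - 1)) i
    rwa [sub_add_cancel] at this
  refine ⟨i, ?_⟩
  rw [← hT]
  exact S.entry _ hi (by rw [hT]; exact h2 i)

/-- Every crossing begins with some coordinate at the bottom of the tower: otherwise it could be
extended to the left. -/
theorem crossing_start (S : NFC) (d : ℕ) (o : ℤ → S.Xd d)
    (ho : ∀ j, S.Td d (o j) = o (j + 1)) {n : ℕ} (hs : 1 ≤ S.spa n) {a b : ℤ} (hab : a ≤ b)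
    (hJ : S.IsCrossing d o n (Finset.Icc a b)) : ∃ i, (o a i).1 n = some 0 := by
  obtain ⟨-, hC, ht, hmax⟩ := hJ
  have ha : a ∈ Finset.Icc a b := Finset.mem_Icc.2 ⟨le_rfl, hab⟩
  refine S.entryD d o ho (fun hpre => ?_) (hC a ha)
  have hcol : ∀ i, S.tcol n (o a i) = S.tcol n (o (a - 1) i) := by
    intro i
    have hT : S.T (o (a - 1) i) = o a i := by
      have := congrFun (ho (a - 1)) i
      rwa [sub_add_cancel] at this
    obtain ⟨c, hc⟩ := Option.ne_none_iff_exists'.1 (hpre i)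
    have := (S.stay (o (a - 1) i) hs hc (by rw [hT]; exact hC a ha i)).2
    rwa [hT] at this
  have hcase : ∀ j ∈ Finset.Icc (a - 1) b, j = a - 1 ∨ j ∈ Finset.Icc a b := by
    intro j hj
    rw [Finset.mem_Icc] at hj ⊢
    omega
  have hcol' : ∀ i, ∀ j ∈ Finset.Icc (a - 1) b, S.tcol n (o j i) = S.tcol n (o a i) := by
    intro i j hj
    rcases hcase j hj with rfl | hj
    · exact (hcol i).symm
    · exact ht i j hj a ha
  have := hmax (Finset.Icc (a - 1) b) (Finset.Icc_subset_Icc_left (by omega))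
    ⟨a - 1, b, by omega, rfl⟩
    (fun j hj => by
      rcases hcase j hj with rfl | hj
      · exact hpre
      · exact hC j hj)
    (fun i j hj j' hj' => (hcol' i j hj).trans (hcol' i j' hj').symm)
  have hmem : a - 1 ∈ Finset.Icc a b := this ▸ Finset.mem_Icc.2 ⟨le_rfl, by omega⟩
  rw [Finset.mem_Icc] at hmem
  omega

/-- The orbit is in `C_n^d` at time `j`, and `j` belongs to an `n`-crossing of size at most `c`. -/
def InShort (S : NFC) (d : ℕ) (o : ℤ → S.Xd d) (n c : ℕ) (j : ℤ) : Prop :=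
  o j ∈ S.towerD d n ∧ ∃ J : Finset ℤ, S.IsCrossing d o n J ∧ j ∈ J ∧ J.card ≤ c

/-- Times in short crossings lie within `c` after a bottom passage or after the left endpoint. -/
theorem card_inShort_le (S : NFC) (d : ℕ) (o : ℤ → S.Xd d)
    (ho : ∀ j, S.Td d (o j) = o (j + 1)) {n : ℕ} (hs : 1 ≤ S.spa n) (c : ℕ) (p q : ℤ) :
    ((Finset.Icc p q).filter (S.InShort d o n c)).card
      ≤ ((S.starts d o n (Finset.Icc p q)).card + 1) * c := by
  have hsub : (Finset.Icc p q).filter (S.InShort d o n c)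
      ⊆ (insert p (S.starts d o n (Finset.Icc p q))).biUnion
          fun a => Finset.Ico a (a + c) := by
    intro j hj
    obtain ⟨hjI, -, J, hJ, hjJ, hcard⟩ := Finset.mem_filter.1 hj
    obtain ⟨a, b, hab, rfl⟩ := hJ.1
    obtain ⟨i, hi⟩ := S.crossing_start d o ho hs hab hJ
    rw [Int.card_Icc] at hcard
    rw [Finset.mem_Icc] at hjI hjJ
    rw [Finset.mem_biUnion]
    -- a crossing begun before `p` is charged to the endpoint `p`
    by_cases hpa : p ≤ a
    · exact ⟨a, Finset.mem_insert_of_mem (Finset.mem_filter.2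
        ⟨Finset.mem_Icc.2 ⟨hpa, by omega⟩, i, hi⟩), Finset.mem_Ico.2 ⟨by omega, by omega⟩⟩
    · exact ⟨p, Finset.mem_insert_self _ _, Finset.mem_Ico.2 ⟨by omega, by omega⟩⟩
  refine (Finset.card_le_card hsub).trans ((Finset.card_biUnion_le_card_mul _ _ c ?_).trans
    (Nat.mul_le_mul_right _ (Finset.card_insert_le _ _)))
  intro a _
  simp

/-- The holes of `C_n^d`, `n = n_m`, in `[p, q]` lie within `s + 2` before a bottom passage or
before `q + 1`. -/
theorem card_holes_le (S : NFC) (d : ℕ) (o : ℤ → S.Xd d)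
    (ho : ∀ j, S.Td d (o j) = o (j + 1)) (m : ℕ) {p q : ℤ}
    (hM : ∀ j ∈ Finset.Icc p q, o j ∈ S.towerD d (S.nseq (m + 1))) :
    ((Finset.Icc p q).filter (fun j => o j ∉ S.towerD d (S.nseq m))).card
      ≤ ((S.starts d o (S.nseq m) (Finset.Icc p q)).card + 1)
        * (S.spa (S.nseq m) + 2) := by
  have hsub : (Finset.Icc p q).filter (fun j => o j ∉ S.towerD d (S.nseq m))
      ⊆ (insert (q + 1) (S.starts d o (S.nseq m) (Finset.Icc p q))).biUnion
          fun a => Finset.Ico (a - (S.spa (S.nseq m) + 2 : ℕ)) a := by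
    intro j hj
    obtain ⟨hjI, hj⟩ := Finset.mem_filter.1 hj
    simp only [towerD, mem_ofPred_eq, not_forall] at hj
    obtain ⟨i, hi⟩ := hj
    obtain ⟨a, ha, h1, h2⟩ := S.hole_dist (fun j => o j i) (fun j => congrFun (ho j) i)
      (fun j hj => hM j hj i) hjI hi
    refine Finset.mem_biUnion.2 ⟨a, ?_, Finset.mem_Ico.2 ⟨h1, h2⟩⟩
    rcases ha with rfl | ⟨ha, ha'⟩
    · exact Finset.mem_insert_self _ _
    · exact Finset.mem_insert_of_mem (Finset.mem_filter.2 ⟨ha, i, ha'⟩)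
  refine (Finset.card_le_card hsub).trans ((Finset.card_biUnion_le_card_mul _ _
    (S.spa (S.nseq m) + 2) ?_).trans (Nat.mul_le_mul_right _ (Finset.card_insert_le _ _)))
  intro a _
  simp

theorem towerD_mono (S : NFC) (d : ℕ) {n m : ℕ} (h : n ≤ m) :
    S.towerD d n ⊆ S.towerD d m := fun _ hy i => S.tower_mono h (hy i)

end NFC

/-! ### Cutting an interval into pieces -/

/-- Cutting an interval at the points of a set `A` which contains all the entry times into `G`
breaks the part of the interval lying in `G` into intervals, indexed by their cut points. -/
theorem exists_pieces (G : ℤ → Prop) {p q : ℤ} (A : Finset ℤ) (hp : p ∈ A)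
    (hA : ∀ j ∈ Finset.Icc p q, G j → ¬ G (j - 1) → j ∈ A) :
    ∃ F : ℤ → Finset ℤ, (∀ a ∈ A, F a = ∅ ∨ IsIntervalZ (F a)) ∧
      ((A : Set ℤ).PairwiseDisjoint F) ∧ A.biUnion F = (Finset.Icc p q).filter G := by
  refine ⟨fun a => (Finset.Icc p q).filter fun j =>
    G j ∧ a ≤ j ∧ ∀ b ∈ A, b ≤ j → b ≤ a, ?_, ?_, ?_⟩
  · intro a ha
    set F := (Finset.Icc p q).filter fun j => G j ∧ a ≤ j ∧ ∀ b ∈ A, b ≤ j → b ≤ a with hF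
    rcases F.eq_empty_or_nonempty with h | h
    · exact Or.inl h
    right
    have hmem : ∀ {j}, j ∈ F ↔ (p ≤ j ∧ j ≤ q) ∧ G j ∧ a ≤ j ∧ ∀ b ∈ A, b ≤ j → b ≤ a := by
      intro j
      rw [hF, Finset.mem_filter, Finset.mem_Icc]
    have he := F.max'_mem h
    have hae := (hmem.1 he).2.2.1
    refine ⟨a, F.max' h, hae, ?_⟩
    -- going down from the largest element, one stays in the piece until `a` is reached
    have hdown : ∀ k : ℕ, a ≤ F.max' h - k → F.max' h - k ∈ F := by
      intro k
      induction k with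
      | zero => intro _; simpa using he
      | succ k ih =>
        intro hk
        push_cast at hk ⊢
        obtain ⟨⟨h1, h2⟩, h3, h4, h5⟩ := hmem.1 (ih (by omega))
        have hnA : F.max' h - k ∉ A := fun hin => by
          have := h5 _ hin le_rfl
          omega
        have hG : G (F.max' h - k - 1) := by
          by_contra hG
          exact hnA (hA _ (Finset.mem_Icc.2 ⟨h1, h2⟩) h3 hG)
        rw [show F.max' h - ((k : ℤ) + 1) = F.max' h - k - 1 by ring]
        have hpa : p ≤ a := h5 p hp h1
        exact hmem.2 ⟨⟨by omega, by omega⟩, hG, by omega, fun b hb hb' => h5 b hb (by omega)⟩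
    ext j
    rw [Finset.mem_Icc]
    constructor
    · exact fun hj => ⟨(hmem.1 hj).2.2.1, F.le_max' j hj⟩
    · rintro ⟨h1, h2⟩
      have := hdown (F.max' h - j).toNat (by omega)
      rwa [show F.max' h - ((F.max' h - j).toNat : ℤ) = j by omega] at this
  · intro a ha b hb hab
    rw [Function.onFun, Finset.disjoint_left]
    intro j hj hj'
    obtain ⟨-, -, h1, h2⟩ := Finset.mem_filter.1 hj
    obtain ⟨-, -, h3, h4⟩ := Finset.mem_filter.1 hj'
    exact hab (le_antisymm (h4 a ha h1) (h2 b hb h3))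
  · ext j
    simp only [Finset.mem_biUnion, Finset.mem_filter]
    constructor
    · rintro ⟨a, -, h1, h2, -⟩
      exact ⟨h1, h2⟩
    · rintro ⟨h1, h2⟩
      have hne : (A.filter (· ≤ j)).Nonempty :=
        ⟨p, Finset.mem_filter.2 ⟨hp, (Finset.mem_Icc.1 h1).1⟩⟩
      obtain ⟨h3, h4⟩ := Finset.mem_filter.1 (Finset.max'_mem _ hne)
      exact ⟨_, h3, h1, h2, h4, fun b hb hb' =>
        Finset.le_max' _ _ (Finset.mem_filter.2 ⟨hb, hb'⟩)⟩

/-! ### Descending from tower `n_{m+1}` to tower `n_m` -/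

/-- The gain from passing to tower `n_{lb+e+1}` outweighs the possible loss of density. -/
theorem loss_factor (lb e : ℕ) :
    (1 : ℝ) ≤ 4 / 3 ^ lb * (1 / 2) ^ (e + 2) * (1 / 2) ^ (e + 2) * 9 ^ (lb + e + 1) := by
  have e1 : (4 : ℝ) / 3 ^ lb * (1 / 2) ^ (e + 2) * (1 / 2) ^ (e + 2) * 9 ^ (lb + e + 1)
      = 3 ^ lb * (9 / 4) ^ (e + 1) := by
    rw [show lb + e + 1 = lb + (e + 1) by ring, pow_add (9 : ℝ),
      show (9 : ℝ) ^ lb = 3 ^ lb * 3 ^ lb by rw [← mul_pow]; norm_num,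
      mul_assoc (4 / 3 ^ lb), ← mul_pow, div_pow 9 4, pow_succ _ (e + 1)]
    norm_num
    field_simp
    rw [← mul_pow]
    norm_num
  rw [e1]
  exact one_le_mul_of_one_le_of_one_le (one_le_pow₀ (by norm_num))
    (one_le_pow₀ (by norm_num))

namespace NFC

/-- On an interval `I` of length at least `η h_n`, the number of bottom passages, plus one for an
endpoint, is at most a constant times `|I| / h_n`. -/
theorem card_cuts_le (S : NFC) (d : ℕ) (η : ℝ) (hη0 : 0 < η) (o : ℤ → S.Xd d)
    (ho : ∀ j, S.Td d (o j) = o (j + 1)) (n : ℕ) {p q : ℤ} (hpq : p ≤ q)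
    (hI : η * S.hgt n ≤ (Finset.Icc p q).card) :
    (((S.starts d o n (Finset.Icc p q)).card : ℝ) + 1) * S.hgt n
      ≤ ((1 + d) / η + d) * (Finset.Icc p q).card := by
  have h1 : ((S.starts d o n (Finset.Icc p q)).card : ℝ) * S.hgt n
      ≤ d * ((Finset.Icc p q).card + S.hgt n) := by
    exact_mod_cast S.card_starts d o ho n hpq
  have h2 : (S.hgt n : ℝ) ≤ (Finset.Icc p q).card / η := by
    rw [le_div_iff₀ hη0]; linarith
  calc (((S.starts d o n (Finset.Icc p q)).card : ℝ) + 1) * S.hgt n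
      ≤ (1 + d) * S.hgt n + d * (Finset.Icc p q).card := by linarith
    _ ≤ (1 + d) * ((Finset.Icc p q).card / η) + d * (Finset.Icc p q).card := by gcongr
    _ = _ := by ring

/-- Most of a long interval spent in `C_{n_{m+1}}^d` is spent in `C_{n_m}^d`. -/
theorem card_tower_ge (S : NFC) (d : ℕ) (η : ℝ) (hη0 : 0 < η) (o : ℤ → S.Xd d)
    (ho : ∀ j, S.Td d (o j) = o (j + 1)) (m : ℕ)
    (hs : (S.spa (S.nseq m) : ℝ) + 2 ≤ η / (2 * ((1 + d) / η + d)) * S.hgt (S.nseq m))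
    {p q : ℤ} (hpq : p ≤ q)
    (hM : ∀ j ∈ Finset.Icc p q, o j ∈ S.towerD d (S.nseq (m + 1)))
    (hI : η * S.hgt (S.nseq m) ≤ (Finset.Icc p q).card) :
    (1 - η / 2) * (Finset.Icc p q).card
      ≤ ((Finset.Icc p q).filter (fun j => o j ∈ S.towerD d (S.nseq m))).card := by
  have h1 := S.card_cuts_le d η hη0 o ho (S.nseq m) hpq hI
  have h2 : (((Finset.Icc p q).filter (fun j => o j ∉ S.towerD d (S.nseq m))).card : ℝ)
      ≤ ((S.starts d o (S.nseq m) (Finset.Icc p q)).card + 1) * (S.spa (S.nseq m) + 2) := by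
    exact_mod_cast S.card_holes_le d o ho m hM
  have h3 : (((Finset.Icc p q).filter (fun j => o j ∈ S.towerD d (S.nseq m))).card : ℝ)
      + ((Finset.Icc p q).filter (fun j => o j ∉ S.towerD d (S.nseq m))).card
      = (Finset.Icc p q).card := by
    exact_mod_cast Finset.card_filter_add_card_filter_not _
  set C : ℝ := (1 + d) / η + d with hC
  have hC0 : 0 < C := by positivity
  have h4 : (((S.starts d o (S.nseq m) (Finset.Icc p q)).card : ℝ) + 1)
      * (S.spa (S.nseq m) + 2) ≤ η / 2 * (Finset.Icc p q).card := by
    calc (((S.starts d o (S.nseq m) (Finset.Icc p q)).card : ℝ) + 1)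
          * (S.spa (S.nseq m) + 2)
        ≤ ((S.starts d o (S.nseq m) (Finset.Icc p q)).card + 1)
          * (η / (2 * C) * S.hgt (S.nseq m)) := by gcongr
      _ = η / (2 * C) * (((S.starts d o (S.nseq m) (Finset.Icc p q)).card + 1)
          * S.hgt (S.nseq m)) := by ring
      _ ≤ η / (2 * C) * (C * (Finset.Icc p q).card) := by gcongr
      _ = _ := by field_simp
  linarith

set_option maxHeartbeats 800000 in
/-- The two estimates for an interval spent in `C_{n_{lb+e+1}}^d`, by induction on `e`. The
pieces of length at least `η h_{n_{lb+e}}` are handled by the induction hypothesis, and the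
short ones have total length at most `C|I|/9^(lb+e+1)` with `C = (1+d)/η + d`. -/
theorem estimates (S : NFC) (d : ℕ) (η : ℝ) (hη0 : 0 < η) (hη1 : η ≤ 1 / 2) (o : ℤ → S.Xd d)
    (ho : ∀ j, S.Td d (o j) = o (j + 1)) (lb : ℕ) (hlb : 1 ≤ lb) (c : ℕ)
    (hs : ∀ m, lb ≤ m →
      (S.spa (S.nseq m) : ℝ) + 2 ≤ η / (2 * ((1 + d) / η + d)) * S.hgt (S.nseq m))
    (h9 : ((1 + d) / η + d) ≤ η / 2 * 9 ^ lb) (e : ℕ) :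
    ∀ p q : ℤ, p ≤ q → (∀ j ∈ Finset.Icc p q, o j ∈ S.towerD d (S.nseq (lb + e + 1))) →
      η * S.hgt (S.nseq (lb + e)) ≤ (Finset.Icc p q).card →
      (1 - η) ^ (e + 1) * (Finset.Icc p q).card
        ≤ ((Finset.Icc p q).filter (fun j => o j ∈ S.towerD d (S.nseq lb))).card ∧
      (((Finset.Icc p q).filter (S.InShort d o (S.nseq lb) c)).card : ℝ)
        ≤ (2 * ((1 + d) / η + d) * c / S.hgt (S.nseq lb)
            + 4 * ((1 + d) / η + d) / 3 ^ lb * (1 - (1 / 2) ^ (e + 1)))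
          * ((Finset.Icc p q).filter (fun j => o j ∈ S.towerD d (S.nseq lb))).card := by
  set C : ℝ := (1 + d) / η + d with hC
  have hC0 : 0 < C := by positivity
  induction e with
  | zero =>
    intro p q hpq hM hI
    have h1 := S.card_cuts_le d η hη0 o ho (S.nseq lb) hpq hI
    have h2 := S.card_tower_ge d η hη0 o ho lb (hs lb le_rfl) hpq hM hI
    have h3 : (((Finset.Icc p q).filter (S.InShort d o (S.nseq lb) c)).card : ℝ)
        ≤ ((S.starts d o (S.nseq lb) (Finset.Icc p q)).card + 1) * c := by
      exact_mod_cast S.card_inShort_le d o ho (S.spa_nseq_pos hlb) c p q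
    have hpos : (0 : ℝ) < S.hgt (S.nseq lb) := by exact_mod_cast S.hgt_pos _
    rw [← hC] at h1
    set I := Finset.Icc p q
    set G := ((I.filter (fun j => o j ∈ S.towerD d (S.nseq lb))).card : ℝ)
    have hI0 : (0 : ℝ) ≤ I.card := by positivity
    have hIG : (I.card : ℝ) ≤ 2 * G := by nlinarith
    refine ⟨by rw [zero_add, pow_one]; nlinarith, ?_⟩
    have hG0 : 0 ≤ G := by positivity
    have h4 : (((S.starts d o (S.nseq lb) I).card : ℝ) + 1) ≤ C * (2 * G) / S.hgt (S.nseq lb) := by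
      rw [le_div_iff₀ hpos]
      exact h1.trans (by gcongr)
    calc ((I.filter (S.InShort d o (S.nseq lb) c)).card : ℝ)
        ≤ C * (2 * G) / S.hgt (S.nseq lb) * c := h3.trans (by gcongr)
      _ = (2 * C * c / S.hgt (S.nseq lb) + 0) * G := by ring
      _ ≤ _ := by
        gcongr
        norm_num
        positivity
  | succ e ih =>
    intro p q hpq hM hI
    obtain ⟨m, hm⟩ : ∃ m, m = lb + e + 1 := ⟨_, rfl⟩
    rw [← add_assoc lb e 1, ← hm] at hM hI
    rw [← hm] at ih
    have h1 := S.card_cuts_le d η hη0 o ho (S.nseq m) hpq hI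
    have h2 := S.card_tower_ge d η hη0 o ho m (hs m (by omega)) hpq hM hI
    rw [← hC] at h1
    set I := Finset.Icc p q with hIdef
    set A := insert p (S.starts d o (S.nseq m) I) with hA
    have hAR : (A.card : ℝ) ≤ (S.starts d o (S.nseq m) I).card + 1 := by
      exact_mod_cast Finset.card_insert_le _ _
    obtain ⟨F, hF1, hF2, hF3⟩ := exists_pieces (fun j => o j ∈ S.towerD d (S.nseq m))
      (p := p) (q := q) A (Finset.mem_insert_self _ _) fun j hj hG hG' =>
        Finset.mem_insert_of_mem (Finset.mem_filter.2 ⟨hj, S.entryD d o ho hG' hG⟩)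
    have hsum : ∀ Q : ℤ → Prop, (∀ j, Q j → o j ∈ S.towerD d (S.nseq m)) →
        ((I.filter Q).card : ℝ) = ∑ a ∈ A, (((F a).filter Q).card : ℝ) := by
      intro Q hQ
      have : I.filter Q = A.biUnion fun a => (F a).filter Q := by
        rw [← Finset.filter_biUnion, hF3, Finset.filter_filter]
        exact Finset.filter_congr fun j _ => ⟨fun h => ⟨hQ j h, h⟩, fun h => h.2⟩
      rw [this, Finset.card_biUnion]
      · push_cast; rfl
      · intro a ha b hb hab
        exact Finset.disjoint_filter_filter (hF2 ha hb hab)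
    have hmono : S.towerD d (S.nseq lb) ⊆ S.towerD d (S.nseq m) :=
      S.towerD_mono d (S.nseq_strictMono.monotone (by omega))
    have hsG := hsum (fun j => o j ∈ S.towerD d (S.nseq lb)) fun j hj => hmono hj
    have hsB := hsum (S.InShort d o (S.nseq lb) c) fun j hj => hmono hj.1
    have hsT : ((I.filter (fun j => o j ∈ S.towerD d (S.nseq m))).card : ℝ)
        = ∑ a ∈ A, ((F a).card : ℝ) := by
      rw [← hF3, Finset.card_biUnion hF2]
      push_cast; rfl
    set h' : ℝ := ((S.hgt (S.nseq (lb + e)) : ℕ) : ℝ) with hh'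
    set κ : ℝ := 2 * C * c / S.hgt (S.nseq lb) + 4 * C / 3 ^ lb * (1 - (1 / 2) ^ (e + 1)) with hκ
    have hh0 : 0 ≤ h' := by positivity
    have hκ0 : 0 ≤ κ := by
      have : (1 / 2 : ℝ) ^ (e + 1) ≤ 1 := pow_le_one₀ (by norm_num) (by norm_num)
      have : 0 ≤ 1 - (1 / 2 : ℝ) ^ (e + 1) := by linarith
      positivity
    have h1η : 0 ≤ 1 - η := by linarith
    have hpiece : ∀ a ∈ A,
        (1 - η) ^ (e + 1) * ((F a).card - η * h')
          ≤ ((F a).filter (fun j => o j ∈ S.towerD d (S.nseq lb))).card ∧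
        (((F a).filter (S.InShort d o (S.nseq lb) c)).card : ℝ)
          ≤ κ * ((F a).filter (fun j => o j ∈ S.towerD d (S.nseq lb))).card + η * h' := by
      intro a ha
      by_cases hbig : η * h' ≤ (F a).card ∧ F a ≠ ∅
      · obtain ⟨p', q', hpq', hFa⟩ := (hF1 a ha).resolve_left hbig.2
        have hin : ∀ j ∈ Finset.Icc p' q', o j ∈ S.towerD d (S.nseq m) := by
          intro j hj
          rw [← hFa] at hj
          have : j ∈ A.biUnion F := Finset.mem_biUnion.2 ⟨a, ha, hj⟩
          rw [hF3] at this
          exact (Finset.mem_filter.1 this).2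
        obtain ⟨i1, i2⟩ := ih p' q' hpq' hin (by rw [← hFa]; exact hbig.1)
        rw [← hFa] at i1 i2
        have hpw : 0 ≤ (1 - η) ^ (e + 1) * (η * h') := by positivity
        have : 0 ≤ η * h' := by positivity
        exact ⟨by linarith, by linarith⟩
      · have hsmall : ((F a).card : ℝ) ≤ η * h' := by
          by_cases hE : F a = ∅
          · rw [hE]; simp; positivity
          · exact (not_le.1 fun h => hbig ⟨h, hE⟩).le
        have hle : (((F a).filter (S.InShort d o (S.nseq lb) c)).card : ℝ) ≤ (F a).card := by
          exact_mod_cast Finset.card_filter_le _ _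
        refine ⟨?_, ?_⟩
        · refine le_trans (mul_nonpos_of_nonneg_of_nonpos (by positivity) (by linarith)) ?_
          positivity
        · have : 0 ≤ κ * ((F a).filter (fun j => o j ∈ S.towerD d (S.nseq lb))).card := by
            positivity
          linarith
    set G := ((I.filter (fun j => o j ∈ S.towerD d (S.nseq lb))).card : ℝ) with hG
    have hsumG : (1 - η) ^ (e + 1) *
        (((I.filter (fun j => o j ∈ S.towerD d (S.nseq m))).card : ℝ) - A.card * (η * h'))
          ≤ G := by
      rw [hsG, hsT]
      refine le_trans (le_of_eq ?_) (Finset.sum_le_sum fun a ha => (hpiece a ha).1)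
      rw [← Finset.mul_sum, Finset.sum_sub_distrib, Finset.sum_const, nsmul_eq_mul]
    have hsumB : ((I.filter (S.InShort d o (S.nseq lb) c)).card : ℝ)
        ≤ κ * G + A.card * (η * h') := by
      rw [hsG, hsB]
      refine (Finset.sum_le_sum fun a ha => (hpiece a ha).2).trans (le_of_eq ?_)
      rw [Finset.sum_add_distrib, ← Finset.mul_sum, Finset.sum_const, nsmul_eq_mul]
    have hloss : A.card * (η * h') * 9 ^ m ≤ C * I.card := by
      have hr : h' * 9 ^ m ≤ S.hgt (S.nseq m) := by
        rw [hh', hm]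
        exact_mod_cast S.hgt_nseq_ratio (lb + e)
      calc A.card * (η * h') * 9 ^ m = η * (A.card * (h' * 9 ^ m)) := by ring
        _ ≤ 1 * (A.card * (h' * 9 ^ m)) := by gcongr; linarith
        _ = A.card * (h' * 9 ^ m) := one_mul _
        _ ≤ ((S.starts d o (S.nseq m) I).card + 1) * S.hgt (S.nseq m) := by gcongr
        _ ≤ _ := h1
    have hI0 : (0 : ℝ) ≤ I.card := by positivity
    have hloss1 : A.card * (η * h') ≤ η / 2 * I.card := by
      have h9m : C ≤ η / 2 * 9 ^ m := h9.trans (by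
        gcongr
        · norm_num
        · omega)
      have : A.card * (η * h') * 9 ^ m ≤ η / 2 * I.card * 9 ^ m := by
        calc _ ≤ C * I.card := hloss
          _ ≤ η / 2 * 9 ^ m * I.card := by gcongr
          _ = _ := by ring
      exact le_of_mul_le_mul_right this (by positivity)
    have hfirst : (1 - η) ^ (e + 1 + 1) * I.card ≤ G := by
      refine le_trans ?_ hsumG
      rw [pow_succ, mul_assoc]
      gcongr
      linarith
    refine ⟨hfirst, ?_⟩
    have hhalf : (1 / 2 : ℝ) ^ (e + 2) * I.card ≤ G := by
      refine le_trans ?_ hfirst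
      gcongr
      linarith
    have hloss2 : A.card * (η * h') ≤ 4 * C / 3 ^ lb * (1 / 2) ^ (e + 2) * G := by
      have hnum : (1 : ℝ) ≤ 4 / 3 ^ lb * (1 / 2) ^ (e + 2) * (1 / 2) ^ (e + 2) * 9 ^ m := hm ▸ loss_factor lb e
      have : A.card * (η * h') * 9 ^ m
          ≤ 4 * C / 3 ^ lb * (1 / 2) ^ (e + 2) * G * 9 ^ m := by
        calc A.card * (η * h') * 9 ^ m ≤ C * I.card * 1 := by rw [mul_one]; exact hloss
          _ ≤ C * I.card * (4 / 3 ^ lb * (1 / 2) ^ (e + 2) * (1 / 2) ^ (e + 2) * 9 ^ m) := by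
            gcongr
          _ = 4 * C / 3 ^ lb * (1 / 2) ^ (e + 2) * ((1 / 2) ^ (e + 2) * I.card) * 9 ^ m := by
            ring
          _ ≤ _ := by gcongr
      exact le_of_mul_le_mul_right this (by positivity)
    calc ((I.filter (S.InShort d o (S.nseq lb) c)).card : ℝ)
        ≤ κ * G + 4 * C / 3 ^ lb * (1 / 2) ^ (e + 2) * G := by linarith
      _ = _ := by rw [hκ]; ring

end NFC

/-- There are constants `K₁, K₂ > 0` such that for any large enough `ℓ̲`
and any `1 ≤ c ≤ h_{n_ℓ̲}`: if `I` is an interval contained in an `n_{ℓ̲+ℓ}`-crossing with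
`|I| ≥ η h_{n_{ℓ̲+ℓ−1}}`, then the proportion of `j ∈ I` with `(T^{×d})^j x ∈ C_{n_ℓ̲}^d` is
at least `(1−η)^{2ℓ}`, and among those `j`, the proportion belonging to an `n_ℓ̲`-crossing
of size `≤ c` is at most `K₁ c / h_{n_ℓ̲} + K₂ / 3^ℓ̲`. -/
theorem stmt16 (S : NFCX) (d : ℕ) (hd : 2 ≤ d) (η : ℝ) (hη0 : 0 < η)
    (hη1 : η < 1 / (100 * d))
    (o : ℤ → S.toNFC.Xd d) (ho : ∀ j : ℤ, S.toNFC.Td d (o j) = o (j + 1))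
    (hx : ∀ i : Fin d, (o 0) i ∈ S.Xinf) :
    ∃ K₁ K₂ : ℝ, 0 < K₁ ∧ 0 < K₂ ∧ ∃ L0 : ℕ, ∀ lb : ℕ, L0 ≤ lb →
      ∀ c : ℕ, 1 ≤ c → c ≤ S.toNFC.toNFCseq.hgt (S.nseq lb) →
      ∀ ℓ : ℕ, 1 ≤ ℓ → ∀ I : Finset ℤ, IsIntervalZ I →
        (∃ K : Finset ℤ, S.toNFC.IsCrossing d o (S.nseq (lb + ℓ)) K ∧ I ⊆ K) →
        η * (S.toNFC.toNFCseq.hgt (S.nseq (lb + ℓ - 1)) : ℝ) ≤ (I.card : ℝ) →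
        ((1 - η) ^ (2 * ℓ) * (I.card : ℝ) ≤
          ((I.filter (fun j => o j ∈ S.toNFC.towerD d (S.nseq lb))).card : ℝ)) ∧
        (((I.filter (fun j => o j ∈ S.toNFC.towerD d (S.nseq lb) ∧
            ∃ J : Finset ℤ, S.toNFC.IsCrossing d o (S.nseq lb) J ∧ j ∈ J ∧
              J.card ≤ c)).card : ℝ) ≤
          (K₁ * (c : ℝ) / (S.toNFC.toNFCseq.hgt (S.nseq lb) : ℝ) + K₂ / 3 ^ lb) *
            ((I.filter (fun j => o j ∈ S.toNFC.towerD d (S.nseq lb))).card : ℝ)) := by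
  have hη2 : η ≤ 1 / 2 := by
    refine hη1.le.trans ?_
    have : (2 : ℝ) ≤ d := by exact_mod_cast hd
    rw [div_le_div_iff₀ (by positivity) (by norm_num)]
    linarith
  have hC0 : (0 : ℝ) < (1 + d) / η + d := by positivity
  obtain ⟨L, hL⟩ := S.spa_small (η / (2 * ((1 + d) / η + d))) (by positivity)
  obtain ⟨M, hM⟩ := pow_unbounded_of_one_lt (((1 + d) / η + d) / (η / 2))
    (show (1 : ℝ) < 9 by norm_num)
  refine ⟨2 * ((1 + d) / η + d), 4 * ((1 + d) / η + d), by positivity, by positivity,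
    max 1 (max L M), fun lb hlb c _ _ ℓ hℓ I hI hK hsize => ?_⟩
  obtain ⟨hlb1, hlbL, hlbM⟩ : 1 ≤ lb ∧ L ≤ lb ∧ M ≤ lb := by
    simpa using hlb
  obtain ⟨e, rfl⟩ : ∃ e, ℓ = e + 1 := ⟨ℓ - 1, by omega⟩
  obtain ⟨p, q, hpq, rfl⟩ := hI
  obtain ⟨K, hK, hIK⟩ := hK
  have h9 : ((1 + d) / η + d) ≤ η / 2 * 9 ^ lb := by
    rw [div_lt_iff₀ (by positivity)] at hM
    calc (1 + d) / η + d ≤ 9 ^ M * (η / 2) := hM.le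
      _ ≤ 9 ^ lb * (η / 2) := by gcongr; norm_num
      _ = _ := mul_comm _ _
  obtain ⟨h1, h2⟩ := S.toNFC.estimates d η hη0 hη2 o ho lb hlb1 c
    (fun m hm => hL m (hlbL.trans hm)) h9 e p q hpq (fun j hj => hK.2.1 j (hIK hj)) hsize
  refine ⟨le_trans ?_ h1, le_trans (le_of_eq ?_) (h2.trans ?_)⟩
  · gcongr ?_ * _
    exact pow_le_pow_of_le_one (by linarith) (by linarith) (by omega)
  · congr 2
    ext j
    simp only [Finset.mem_filter]
    rfl
  · gcongr ?_ * _
    gcongr _ + ?_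
    have : (0 : ℝ) ≤ (1 / 2 : ℝ) ^ (e + 1) := by positivity
    exact mul_le_of_le_one_right (by positivity) (by linarith)
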